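/- Let X ⊆ ℝⁿ be open, let f : X → ℝⁿ be a C¹ cooperative irreducible vector field, and let H : X → ℝ be a C¹ first integral for ẋ = f(x) with positive gradient. Suppose x ∈ X has the property that for every ε > 0 and every T > 0 there exist θ > T and a solution η : [−θ,0] → X of ẋ = f(x) such that ‖η(0) − x‖ < ε and ‖η(−θ) − x‖ < ε (i.e. x is backward nonwandering). Then x is an equilibrium: f(x) = 0. -/

import Mathlib

open Set Filter Topology

noncomputable section

/-- `f` is a cooperative vector field on `X`: the off-diagonal entries of the
Jacobian are nonnegative. -/
def coopVF {n : ℕ} (f : (Fin n → ℝ) → (Fin n → ℝ)) (X : Set (Fin n → ℝ)) : Prop :=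
  ∀ x ∈ X, ∀ i j : Fin n, i ≠ j → 0 ≤ fderiv ℝ f x (Pi.single j 1) i

/-- The Jacobian matrix of `f` at `x`. -/
def jacMat {n : ℕ} (f : (Fin n → ℝ) → (Fin n → ℝ)) (x : Fin n → ℝ) :
    Fin n → Fin n → ℝ :=
  fun i j => fderiv ℝ f x (Pi.single j 1) i

/-- A matrix is irreducible if for every nonempty proper subset `S` of indices there
are `i ∈ S`, `j ∉ S` with `A i j ≠ 0`. -/
def matIrred {n : ℕ} (A : Fin n → Fin n → ℝ) : Prop :=
  ∀ S : Set (Fin n), S.Nonempty → S ≠ Set.univ → ∃ i ∈ S, ∃ j ∉ S, A i j ≠ 0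

/-- `X` is p-convex: the segment joining any two order-related points of `X` lies in `X`. -/
def pconvex {n : ℕ} (X : Set (Fin n → ℝ)) : Prop :=
  ∀ x ∈ X, ∀ y ∈ X, x < y → segment ℝ x y ⊆ X

/-- `x ≪ y`: strict inequality in every coordinate. -/
def strLt {n : ℕ} (x y : Fin n → ℝ) : Prop := ∀ i, x i < y i

/-- `γ` is a solution of `ẋ = f(x)` on the time interval `I`, with values in `X`. -/
def IsSolOn {n : ℕ} (f : (Fin n → ℝ) → (Fin n → ℝ)) (X : Set (Fin n → ℝ))
    (I : Set ℝ) (γ : ℝ → Fin n → ℝ) : Prop :=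
  (∀ t ∈ I, γ t ∈ X) ∧ (∀ t ∈ I, HasDerivWithinAt γ (f (γ t)) I t)

/-- The ω-limit set (within `X`) of a curve `γ`. -/
def omegaSet {n : ℕ} (X : Set (Fin n → ℝ)) (γ : ℝ → Fin n → ℝ) :
    Set (Fin n → ℝ) :=
  {y | y ∈ X ∧ ∃ t : ℕ → ℝ, Tendsto t atTop atTop ∧
    Tendsto (fun k => γ (t k)) atTop (𝓝 y)}

/-- The α-limit set (within `X`) of a curve `γ`. -/
def alphaSet {n : ℕ} (X : Set (Fin n → ℝ)) (γ : ℝ → Fin n → ℝ) :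
    Set (Fin n → ℝ) :=
  {y | y ∈ X ∧ ∃ t : ℕ → ℝ, Tendsto t atTop atBot ∧
    Tendsto (fun k => γ (t k)) atTop (𝓝 y)}

/-- The Euclidean norm on `Fin n → ℝ`. -/
def eunorm {n : ℕ} (v : Fin n → ℝ) : ℝ := Real.sqrt (∑ i, (v i) ^ 2)

/-- `X` is order-convex: it contains the order interval of any two of its points. -/
def orderConvex {n : ℕ} (X : Set (Fin n → ℝ)) : Prop :=
  ∀ x ∈ X, ∀ y ∈ X, x ≤ y → Set.Icc x y ⊆ X

/-!
Along a solution of `ẋ = f(x)` the vector `q` with entries `qᵢ = ∂ᵢH · fⁱ` has total mass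
`∑ qᵢ = DH(f) = 0` and solves a master equation `q̇ᵢ = ∑ⱼ (Bᵢⱼ qⱼ - Bⱼᵢ qᵢ)`, where
`Bᵢⱼ = ∂ᵢH ∂ⱼfⁱ / ∂ⱼH` is nonnegative off the diagonal and irreducible. Hence `∑ |qᵢ|` is
nonincreasing along solutions, and it drops strictly unless `q = 0`, because by irreducibility some
mass flows between the positive and the nonpositive entries, where it cancels. A solution that
returns near `x` forces `∑ |qᵢ|` to be constant on the forward orbit of `x`, so `f` has zeros on
this orbit arbitrarily close to `x`.
-/

section Calculus

theorem hasDerivWithinAt_abs_Ici {q : ℝ → ℝ} {q' σ t : ℝ} (hq : HasDerivAt q q' t)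
    (hσ : σ * q t = |q t|) (hσ' : q t = 0 → σ * q' = |q'|) :
    HasDerivWithinAt (fun s => |q s|) (σ * q') (Ici t) t := by
  by_cases h0 : q t = 0
  · rw [hσ' h0, hasDerivWithinAt_iff_tendsto_slope]
    refine (hasDerivWithinAt_iff_tendsto_slope.1 (hq.hasDerivWithinAt (s := Ici t))).abs.congr' ?_
    filter_upwards [self_mem_nhdsWithin] with y hy
    have hty : 0 < y - t := sub_pos.2 (lt_of_le_of_ne hy.1 (Ne.symm hy.2))
    simp [slope_def_field, h0, abs_div, abs_of_pos hty]
  · have hsign : σ = SignType.sign (q t) :=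
      mul_right_cancel₀ h0 (hσ.trans (sign_mul_self (q t)).symm)
    rw [hsign]
    exact ((hasDerivAt_abs h0).comp t hq).hasDerivWithinAt

theorem antitoneOn_Icc_of_hasDerivWithinAt_Ici_nonpos {v v' : ℝ → ℝ} {a b : ℝ}
    (hv : ContinuousOn v (Icc a b))
    (hv' : ∀ t ∈ Ioo a b, HasDerivWithinAt v (v' t) (Ici t) t)
    (hnonpos : ∀ t ∈ Ioo a b, v' t ≤ 0) : AntitoneOn v (Icc a b) := by
  intro s hs t ht hst
  rcases hst.eq_or_lt with rfl | hlt
  · rfl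
  have hinterior : ∀ c ∈ Ioo s t, v t ≤ v c := by
    intro c hc
    have hsub : Ico c t ⊆ Ioo a b := fun u hu =>
      ⟨hs.1.trans_lt (hc.1.trans_le hu.1), hu.2.trans_le ht.2⟩
    exact image_le_of_deriv_right_le_deriv_boundary (B := fun _ => v c) (B' := fun _ => 0)
      (hv.mono (Icc_subset_Icc (hs.1.trans hc.1.le) ht.2)) (fun u hu => hv' u (hsub hu)) le_rfl
      continuousOn_const (fun _ _ => hasDerivWithinAt_const _ _ _)
      (fun u hu => hnonpos u (hsub hu)) (right_mem_Icc.2 hc.2.le)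
  have hlim : Tendsto v (𝓝[>] s) (𝓝 (v s)) := by
    rw [← nhdsWithin_Ioo_eq_nhdsGT hlt]
    exact (hv s hs).mono (Ioo_subset_Icc_self.trans (Icc_subset_Icc hs.1 ht.2))
  exact ge_of_tendsto hlim (mem_of_superset (Ioo_mem_nhdsGT hlt) hinterior)

theorem exists_mem_forall_eventually_eq_zero {S ι : Type*} [TopologicalSpace S] [Finite ι]
    {q : S → ι → ℝ} {U : Set S} (hU : IsOpen U) (hne : U.Nonempty) (hq : ContinuousOn q U) :
    ∃ t ∈ U, ∀ i, q t i = 0 → ∀ᶠ s in 𝓝 t, q s i = 0 := by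
  obtain ⟨t, ht, hmax⟩ :=
    Finite.exists_maximalFor' (fun t => {i | q t i ≠ 0}) U (toFinite _) hne
  have hsupport : ∀ᶠ s in 𝓝 t, ∀ i, q t i ≠ 0 → q s i ≠ 0 :=
    eventually_all.2 fun i => eventually_imp_distrib_left.2 fun hi =>
      (continuousAt_pi.1 (hq.continuousAt (hU.mem_nhds ht)) i).eventually_ne hi
  refine ⟨t, ht, fun i hi => ?_⟩
  filter_upwards [hsupport, hU.mem_nhds ht] with s hs hsU
  by_contra hsi
  exact hmax hsU (fun j hj => hs j hj) hsi hi

variable {E F : Type*} [NormedAddCommGroup E] [NormedSpace ℝ E] [NormedAddCommGroup F]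
  [NormedSpace ℝ F]

theorem tendsto_smul_sub_of_hasStrictFDerivAt {f : E → F} {f' : E →L[ℝ] F} {x : E}
    (hf : HasStrictFDerivAt f f' x) (e : E) :
    Tendsto (fun p : ℝ × E => p.1⁻¹ • (f (p.2 + p.1 • e) - f p.2)) (𝓝[≠] 0 ×ˢ 𝓝 x)
      (𝓝 (f' e)) := by
  have hne : ∀ᶠ p : ℝ × E in 𝓝[≠] 0 ×ˢ 𝓝 x, p.1 ≠ 0 :=
    tendsto_fst.eventually self_mem_nhdsWithin
  have hshift : Tendsto (fun p : ℝ × E => p.2 + p.1 • e) (𝓝[≠] 0 ×ˢ 𝓝 x) (𝓝 x) := by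
    simpa using tendsto_snd.add
      ((tendsto_fst.mono_right (nhdsWithin_le_nhds (a := (0 : ℝ)))).smul_const e)
  have hlittle : (fun p : ℝ × E => p.1⁻¹ • (f (p.2 + p.1 • e) - f p.2) - f' e)
      =o[𝓝[≠] 0 ×ˢ 𝓝 x] fun _ => e := by
    refine ((Asymptotics.isBigO_refl (fun p : ℝ × E => p.1⁻¹) _).smul_isLittleO
      (hf.isLittleO.comp_tendsto (hshift.prodMk_nhds tendsto_snd))).congr' ?_ ?_
    · filter_upwards [hne] with p hp
      simp [smul_sub, smul_smul, hp]
    · filter_upwards [hne] with p hp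
      simp [smul_smul, hp]
  exact tendsto_sub_nhds_zero_iff.1 ((Asymptotics.isLittleO_one_iff ℝ).1
    (hlittle.trans_isBigO (Asymptotics.isBigO_const_const e one_ne_zero _)))

/- `H` is only `C¹`, so `DH` cannot be differentiated. Instead differentiate the difference quotient
`r⁻¹ • (H (γ s + r • e) - H (γ s))` in `s` and use the first integral at both points: the result is
`-DH (γ s + r • e)` applied to a difference quotient of `f`, which converges as `r → 0`. -/
theorem hasDerivAt_fderiv_apply_of_firstIntegral {f : E → E} {f' : E →L[ℝ] E} {H : E → F}
    {γ : ℝ → E} {t : ℝ} (hf : HasStrictFDerivAt f f' (γ t)) (hH : ContDiffAt ℝ 1 H (γ t))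
    (hfi : ∀ᶠ y in 𝓝 (γ t), fderiv ℝ H y (f y) = 0)
    (hγ : ∀ᶠ s in 𝓝 t, HasDerivAt γ (f (γ s)) s) (e : E) :
    HasDerivAt (fun s => fderiv ℝ H (γ s) e) (-fderiv ℝ H (γ t) (f' e)) t := by
  have hγt : Tendsto γ (𝓝 t) (𝓝 (γ t)) := hγ.self_of_nhds.continuousAt
  have hbase : Tendsto (fun p : ℝ × ℝ => γ p.2) (𝓝[≠] 0 ×ˢ 𝓝 t) (𝓝 (γ t)) :=
    hγt.comp tendsto_snd
  have hshift : Tendsto (fun p : ℝ × ℝ => γ p.2 + p.1 • e) (𝓝[≠] 0 ×ˢ 𝓝 t) (𝓝 (γ t)) := by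
    simpa using hbase.add
      ((tendsto_fst.mono_right (nhdsWithin_le_nhds (a := (0 : ℝ)))).smul_const e)
  have hdiff : ∀ᶠ y in 𝓝 (γ t), HasFDerivAt H (fderiv ℝ H y) y :=
    (hH.eventually (by simp)).mono fun y hy => (hy.differentiableAt one_ne_zero).hasFDerivAt
  have hquot : Tendsto (fun p : ℝ × ℝ => p.1⁻¹ • (f (γ p.2 + p.1 • e) - f (γ p.2)))
      (𝓝[≠] 0 ×ˢ 𝓝 t) (𝓝 (f' e)) :=
    (tendsto_smul_sub_of_hasStrictFDerivAt hf e).comp (tendsto_id.prodMap hγt)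
  refine hasDerivAt_of_tendstoUniformlyOnFilter (l := 𝓝[≠] (0 : ℝ))
    (f := fun r s => r⁻¹ • (H (γ s + r • e) - H (γ s)))
    (f' := fun r s => -fderiv ℝ H (γ s + r • e) (r⁻¹ • (f (γ s + r • e) - f (γ s))))
    (g' := fun _ => -fderiv ℝ H (γ t) (f' e)) ?_ ?_ ?_
  · exact tendsto_prod_filter_iff.1 ((isBoundedBilinearMap_apply.continuous.tendsto _).comp
      (((hH.continuousAt_fderiv one_ne_zero).tendsto.comp hshift).prodMk_nhds hquot)).neg
  · filter_upwards [hshift.eventually (hdiff.and hfi), hbase.eventually (hdiff.and hfi),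
      tendsto_snd.eventually hγ] with p hp hp' hγp
    have hshifted : HasDerivAt (fun s => H (γ s + p.1 • e))
        (fderiv ℝ H (γ p.2 + p.1 • e) (f (γ p.2))) p.2 :=
      HasFDerivAt.comp_hasDerivAt (f := fun s => γ s + p.1 • e) p.2 hp.1 (hγp.add_const _)
    have hunshifted := hp'.1.comp_hasDerivAt p.2 hγp
    refine ((hshifted.sub hunshifted).const_smul p.1⁻¹).congr_deriv ?_
    simp [map_smul, map_sub, hp.2, hp'.2]
  · filter_upwards [hγt.eventually hdiff] with s hs
    simpa using hasDerivAt_iff_tendsto_slope_zero.1 (hs.hasLineDerivAt e)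

end Calculus

section MasterEquation

theorem abs_sign_le_one (a : ℝ) : |(SignType.sign a : ℝ)| ≤ 1 := by
  rcases lt_trichotomy a 0 with h | h | h <;> simp [h]

theorem mul_sub_mul_nonpos_of_offDiag_nonneg {ι : Type*} {B : Matrix ι ι ℝ} {q σ : ι → ℝ}
    (hB : ∀ i j, i ≠ j → 0 ≤ B i j) (hσ : ∀ i, |σ i| ≤ 1) (hσq : ∀ i, σ i * q i = |q i|) (i j : ι) :
    B i j * (σ i * q j - σ j * q j) ≤ 0 := by
  obtain rfl | hij := eq_or_ne i j
  · simp
  refine mul_nonpos_of_nonneg_of_nonpos (hB i j hij) (sub_nonpos.2 ?_)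
  calc σ i * q j ≤ |σ i| * |q j| := (le_abs_self _).trans_eq (abs_mul _ _)
    _ ≤ |q j| := mul_le_of_le_one_left (abs_nonneg _) (hσ i)
    _ = σ j * q j := (hσq j).symm

variable {ι : Type*} [Fintype ι]

/-- The right-hand side of the master equation `q̇ = masterRate B q`, in which mass flows from `j`
to `i` at rate `B i j * q j`. The diagonal of `B` cancels. -/
def masterRate (B : Matrix ι ι ℝ) (q : ι → ℝ) (i : ι) : ℝ :=
  ∑ j, (B i j * q j - B j i * q i)

variable {B : Matrix ι ι ℝ} {q σ : ι → ℝ}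

theorem sum_mul_masterRate (B : Matrix ι ι ℝ) (q σ : ι → ℝ) :
    ∑ i, σ i * masterRate B q i = ∑ i, ∑ j, B i j * (σ i * q j - σ j * q j) := by
  simp only [masterRate, Finset.mul_sum, mul_sub, Finset.sum_sub_distrib]
  rw [Finset.sum_comm (f := fun i j => σ i * (B j i * q i))]
  simp only [mul_left_comm]

theorem sum_mul_masterRate_nonpos (hB : ∀ i j, i ≠ j → 0 ≤ B i j)
    (hσ : ∀ i, |σ i| ≤ 1) (hσq : ∀ i, σ i * q i = |q i|) :
    ∑ i, σ i * masterRate B q i ≤ 0 := by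
  rw [sum_mul_masterRate]
  exact Finset.sum_nonpos fun i _ => Finset.sum_nonpos fun j _ =>
    mul_sub_mul_nonpos_of_offDiag_nonneg hB hσ hσq i j

theorem sum_sign_mul_masterRate_neg (hB : ∀ i j, i ≠ j → 0 ≤ B i j)
    (hirr : ∀ S : Set ι, S.Nonempty → S ≠ univ → ∃ i ∈ S, ∃ j ∉ S, B i j ≠ 0)
    (hq0 : q ≠ 0) (hsum : ∑ i, q i = 0) :
    ∑ i, (SignType.sign (q i) : ℝ) * masterRate B q i < 0 := by
  obtain ⟨k, -, hk⟩ : ∃ k ∈ Finset.univ, 0 < q k :=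
    Finset.exists_pos_of_sum_zero_of_exists_nonzero q hsum (by simpa using Function.ne_iff.1 hq0)
  obtain ⟨l, hl⟩ : ∃ l, q l ≤ 0 := by
    by_contra! hpos
    exact (Finset.sum_pos (fun i _ => hpos i) ⟨k, Finset.mem_univ k⟩).ne' hsum
  obtain ⟨i, hi, j, hj, hij⟩ :=
    hirr {i | q i ≤ 0} ⟨l, hl⟩ fun h => hk.not_ge (eq_univ_iff_forall.1 h k)
  replace hi : q i ≤ 0 := hi
  replace hj : 0 < q j := not_le.1 hj
  have hBij : 0 < B i j := (hB i j fun h => hi.not_gt (h ▸ hj)).lt_of_ne' hij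
  have hsign : (SignType.sign (q i) : ℝ) ≤ 0 := by
    rcases hi.lt_or_eq with h | h <;> simp [h]
  have hterm := mul_sub_mul_nonpos_of_offDiag_nonneg hB (fun i => abs_sign_le_one (q i))
    fun i => sign_mul_self (q i)
  have hstrict : B i j * (SignType.sign (q i) * q j - SignType.sign (q j) * q j) < 0 := by
    refine mul_neg_of_pos_of_neg hBij ?_
    rw [sign_mul_self, abs_of_pos hj]
    nlinarith
  rw [sum_mul_masterRate]
  exact Finset.sum_neg' (fun i _ => Finset.sum_nonpos fun j _ => hterm i j) ⟨i, Finset.mem_univ i,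
    Finset.sum_neg' (fun j _ => hterm i j) ⟨j, Finset.mem_univ j, hstrict⟩⟩

variable {Q : ℝ → Matrix ι ι ℝ} {q : ℝ → ι → ℝ} {a b : ℝ}

theorem antitoneOn_sum_abs_of_masterRate (hQ : ∀ t ∈ Ioo a b, ∀ i j, i ≠ j → 0 ≤ Q t i j)
    (hqc : ContinuousOn q (Icc a b))
    (hq : ∀ t ∈ Ioo a b, HasDerivAt q (masterRate (Q t) (q t)) t) :
    AntitoneOn (fun t => ∑ i, |q t i|) (Icc a b) := by
  let σ : ℝ → ι → ℝ := fun t i =>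
    if q t i = 0 then SignType.sign (masterRate (Q t) (q t) i) else SignType.sign (q t i)
  have hσ_le : ∀ t i, |σ t i| ≤ 1 := fun t i => by
    simp only [σ]; split_ifs <;> exact abs_sign_le_one _
  have hσ_mul : ∀ t i, σ t i * q t i = |q t i| := fun t i => by
    by_cases h : q t i = 0 <;> simp [σ, h, sign_mul_self]
  have hσ_mul' : ∀ t i, q t i = 0 → σ t i * masterRate (Q t) (q t) i =
      |masterRate (Q t) (q t) i| := fun t i h => by simp [σ, h, sign_mul_self]
  refine antitoneOn_Icc_of_hasDerivWithinAt_Ici_nonpos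
    (v' := fun t => ∑ i, σ t i * masterRate (Q t) (q t) i)
    (continuousOn_finsetSum _ fun i _ => (continuousOn_pi.1 hqc i).abs) (fun t ht => ?_)
    fun t ht => sum_mul_masterRate_nonpos (hQ t ht) (hσ_le t) (hσ_mul t)
  exact HasDerivWithinAt.fun_sum fun i _ =>
    hasDerivWithinAt_abs_Ici (hasDerivAt_pi.1 (hq t ht) i) (hσ_mul t i) (hσ_mul' t i)

/- At a time of maximal support every coordinate that vanishes does so on a neighbourhood, so
that `∑ i, |q t i|` has the right derivative `∑ i, sign (q t i) * q' t i` there. -/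
theorem exists_eq_zero_of_sum_abs_eq_const (hab : a < b)
    (hQ : ∀ t ∈ Ioo a b, ∀ i j, i ≠ j → 0 ≤ Q t i j)
    (hirr : ∀ t ∈ Ioo a b, ∀ S : Set ι, S.Nonempty → S ≠ univ → ∃ i ∈ S, ∃ j ∉ S, Q t i j ≠ 0)
    (hq : ∀ t ∈ Ioo a b, HasDerivAt q (masterRate (Q t) (q t)) t)
    (hsum : ∀ t ∈ Ioo a b, ∑ i, q t i = 0) {c : ℝ} (hc : ∀ t ∈ Ioo a b, ∑ i, |q t i| = c) :
    ∃ t ∈ Ioo a b, q t = 0 := by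
  obtain ⟨t, ht, hzero⟩ := exists_mem_forall_eventually_eq_zero isOpen_Ioo (nonempty_Ioo.2 hab)
    fun t ht => (hq t ht).continuousAt.continuousWithinAt
  refine ⟨t, ht, by_contra fun hqt => ?_⟩
  have hrate : ∀ i, q t i = 0 → masterRate (Q t) (q t) i = 0 := fun i hi =>
    (hasDerivAt_pi.1 (hq t ht) i).unique
      ((hasDerivAt_const t 0).congr_of_eventuallyEq (hzero i hi))
  have hderiv : HasDerivWithinAt (fun s => ∑ i, |q s i|)
      (∑ i, SignType.sign (q t i) * masterRate (Q t) (q t) i) (Ici t) t :=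
    HasDerivWithinAt.fun_sum fun i _ => hasDerivWithinAt_abs_Ici (hasDerivAt_pi.1 (hq t ht) i)
      (sign_mul_self _) fun hi => by simp [hrate i hi]
  have hconst : HasDerivAt (fun s => ∑ i, |q s i|) 0 t :=
    (hasDerivAt_const t c).congr_of_eventuallyEq (mem_of_superset (Ioo_mem_nhds ht.1 ht.2) hc)
  exact (sum_sign_mul_masterRate_neg (hQ t ht) (hirr t ht) hqt (hsum t ht)).ne
    ((uniqueDiffOn_Ici t t self_mem_Ici).eq_deriv _ hderiv hconst.hasDerivWithinAt)

end MasterEquation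

section LocalFlow

variable {E : Type*} [NormedAddCommGroup E] [NormedSpace ℝ E] {f : E → E} {x : E} {U : Set E}

theorem mapsTo_closedBall_of_isIntegralCurveOn {η : ℝ → E} {r M a b : ℝ}
    (hf : ∀ y ∈ Metric.closedBall x r, ‖f y‖ < M) (hM : 0 ≤ M)
    (hη : IsIntegralCurveOn η (fun _ => f) (Icc a b)) (hr : dist (η a) x + M * (b - a) ≤ r) :
    MapsTo η (Icc a b) (Metric.closedBall x r) := by
  have hbound : ∀ t ∈ Icc a b, dist (η a) x + M * (t - a) ≤ r := fun t ht =>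
    le_trans (by gcongr; exact ht.2) hr
  have hfence := image_norm_le_of_norm_deriv_right_lt_deriv_boundary (f := fun t => η t - x)
    (f' := fun t => f (η t)) (B := fun t => dist (η a) x + M * (t - a)) (B' := fun _ => M)
    (hη.continuousOn.sub continuousOn_const)
    (fun t ht => ((hη t (Ico_subset_Icc_self ht)).mono_of_mem_nhdsWithin
      (Icc_mem_nhdsGE_of_mem ht)).sub_const x)
    (by simp [dist_eq_norm])
    (fun t => by simpa using (((hasDerivAt_id t).sub_const a).const_mul M).const_add (dist (η a) x))
    (fun t ht h => hf _ (by
      rw [mem_closedBall_iff_norm, h]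
      exact hbound t (Ico_subset_Icc_self ht)))
  exact fun t ht => mem_closedBall_iff_norm.2 ((hfence ht).trans (hbound t ht))

theorem exists_forall_isIntegralCurveOn_mapsTo (hf : ContinuousAt f x) (hU : U ∈ 𝓝 x) :
    ∃ τ > 0, ∃ δ > 0, ∀ b ≤ τ, ∀ η : ℝ → E, IsIntegralCurveOn η (fun _ => f) (Icc 0 b) →
      dist (η 0) x ≤ δ → MapsTo η (Icc 0 b) U := by
  have hM : 0 < ‖f x‖ + 1 := by positivity
  obtain ⟨r, hr, hball⟩ := Metric.nhds_basis_closedBall.mem_iff.1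
    (inter_mem hU (hf.norm.eventually_lt_const (lt_add_one ‖f x‖)))
  refine ⟨r / 2 / (‖f x‖ + 1), by positivity, r / 2, by positivity, fun b hb η hη h0 => ?_⟩
  refine (mapsTo_closedBall_of_isIntegralCurveOn (fun y hy => (hball hy).2) hM.le hη ?_).mono_right
    fun y hy => (hball hy).1
  have hbM := (le_div_iff₀' hM).1 hb
  linarith

theorem dist_le_mul_exp_of_isIntegralCurveOn {K : NNReal} {s : Set E} (hf : LipschitzOnWith K f s)
    {η γ : ℝ → E} {b : ℝ} (hη : IsIntegralCurveOn η (fun _ => f) (Icc 0 b))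
    (hηs : MapsTo η (Icc 0 b) s) (hγ : IsIntegralCurveOn γ (fun _ => f) (Icc 0 b))
    (hγs : MapsTo γ (Icc 0 b) s) :
    ∀ t ∈ Icc 0 b, dist (η t) (γ t) ≤ dist (η 0) (γ 0) * Real.exp (K * t) := by
  have hright : ∀ {g : ℝ → E}, IsIntegralCurveOn g (fun _ => f) (Icc 0 b) →
      ∀ t ∈ Ico 0 b, HasDerivWithinAt g (f (g t)) (Ici t) t := fun hg t ht =>
    (hg t (Ico_subset_Icc_self ht)).mono_of_mem_nhdsWithin (Icc_mem_nhdsGE_of_mem ht)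
  simpa only [sub_zero] using dist_le_of_trajectories_ODE_of_mem (v := fun _ => f) (s := fun _ => s)
    (fun _ _ => hf) hη.continuousOn (hright hη) (fun t ht => hηs (Ico_subset_Icc_self ht))
    hγ.continuousOn (hright hγ) (fun t ht => hγs (Ico_subset_Icc_self ht)) le_rfl

theorem exists_isIntegralCurveOn_dist_le_mul_exp [CompleteSpace E] (hf : ContDiffAt ℝ 1 f x)
    (hU : U ∈ 𝓝 x) {T : ℝ} (hT : 0 < T) :
    ∃ τ ∈ Ioo 0 T, ∃ γ : ℝ → E, γ 0 = x ∧ IsIntegralCurveOn γ (fun _ => f) (Icc 0 τ) ∧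
      MapsTo γ (Icc 0 τ) U ∧ ∃ K : ℝ, ∃ δ > 0, ∀ η : ℝ → E,
        IsIntegralCurveOn η (fun _ => f) (Icc 0 τ) → dist (η 0) x ≤ δ →
          ∀ t ∈ Icc 0 τ, dist (η t) (γ t) ≤ dist (η 0) x * Real.exp (K * t) := by
  obtain ⟨K, s, hs, hlip⟩ := hf.exists_lipschitzOnWith
  obtain ⟨τ₀, hτ₀, δ, hδ, hmaps⟩ :=
    exists_forall_isIntegralCurveOn_mapsTo hf.continuousAt (inter_mem hs hU)
  obtain ⟨γ, hγ0, ε, hε, hγε⟩ :=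
    hf.exists_forall_mem_closedBall_exists_eq_forall_mem_Ioo_hasDerivAt₀ 0
  obtain ⟨τ, hτ, hτmin⟩ := exists_between (lt_min hT (lt_min hτ₀ hε))
  simp only [lt_min_iff] at hτmin
  have hγ : IsIntegralCurveOn γ (fun _ => f) (Icc 0 τ) := fun t ht =>
    (hγε t ⟨by linarith [ht.1], by linarith [ht.2]⟩).hasDerivWithinAt
  have hγm := hmaps τ hτmin.2.1.le γ hγ (by simpa [hγ0] using hδ.le)
  refine ⟨τ, ⟨hτ, hτmin.1⟩, γ, hγ0, hγ, fun t ht => (hγm ht).2, K, δ, hδ, fun η hη hη0 t ht => ?_⟩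
  rw [← hγ0]
  exact dist_le_mul_exp_of_isIntegralCurveOn hlip hη
    (fun t ht => (hmaps τ hτmin.2.1.le η hη hη0 ht).1) hγ (fun t ht => (hγm ht).1) t ht

end LocalFlow

section Nonwandering

variable {E : Type*} [NormedAddCommGroup E] [NormedSpace ℝ E] {f : E → E} {X U : Set E} {x : E}
  {T : ℝ}

/-- Arbitrarily close to `x` there are a starting point and an end point of a solution of
`ẋ = f(x)` in `X` that lasts longer than `T`. The point `x` is backward nonwandering if this holds
for every `T`. -/
def IsNonwanderingAfter (f : E → E) (X : Set E) (T : ℝ) (x : E) : Prop :=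
  ∀ ε > 0, ∃ θ > T, ∃ η : ℝ → E, MapsTo η (Icc (-θ) 0) X ∧
    IsIntegralCurveOn η (fun _ => f) (Icc (-θ) 0) ∧ dist (η 0) x < ε ∧ dist (η (-θ)) x < ε

theorem IsNonwanderingAfter.exists_seq (h : IsNonwanderingAfter f X T x) :
    ∃ (θ : ℕ → ℝ) (η : ℕ → ℝ → E), (∀ k, T < θ k) ∧ (∀ k, MapsTo (η k) (Icc 0 (θ k)) X) ∧
      (∀ k, IsIntegralCurveOn (η k) (fun _ => f) (Icc 0 (θ k))) ∧
      Tendsto (fun k => η k 0) atTop (𝓝 x) ∧ Tendsto (fun k => η k (θ k)) atTop (𝓝 x) := by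
  choose θ hθ η hηX hη hend hstart using fun k : ℕ => h (1 / (k + 1)) Nat.one_div_pos_of_nat
  have hshift : ∀ k, MapsTo (· - θ k) (Icc 0 (θ k)) (Icc (-θ k) 0) := fun k t ht =>
    ⟨by linarith [ht.1], by linarith [ht.2]⟩
  have hlim : ∀ {y : ℕ → E}, (∀ k : ℕ, dist (y k) x < 1 / (k + 1)) → Tendsto y atTop (𝓝 x) :=
    fun hy => tendsto_iff_dist_tendsto_zero.2 (squeeze_zero (fun _ => dist_nonneg)
      (fun k => (hy k).le) tendsto_one_div_add_atTop_nhds_zero_nat)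
  refine ⟨θ, fun k t => η k (t - θ k), hθ, fun k => (hηX k).comp (hshift k), fun k =>
    ((hη k).comp_sub (θ k)).mono fun t ht => ?_, ?_, ?_⟩
  · simpa only [mem_vadd_set_iff_neg_vadd_mem, vadd_eq_add, neg_add_eq_sub] using hshift k ht
  · simpa only [zero_sub] using hlim hstart
  · simpa only [sub_self] using hlim hend

/- LaSalle's argument: a long solution that starts and ends near `x` follows the orbit of `x` for a
while and then has to come back, so that the Lyapunov function cannot have dropped. -/
theorem exists_isIntegralCurveOn_lyapunov_eq [CompleteSpace E] {V : E → ℝ} (hX : X ∈ 𝓝 x)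
    (hf : ContDiffAt ℝ 1 f x) (hV : ∀ᶠ y in 𝓝 x, ContinuousAt V y)
    (hanti : ∀ (a b : ℝ) (η : ℝ → E), MapsTo η (Icc a b) X →
      IsIntegralCurveOn η (fun _ => f) (Icc a b) → AntitoneOn (fun t => V (η t)) (Icc a b))
    (hT : 0 < T) (hx : IsNonwanderingAfter f X T x) (hU : U ∈ 𝓝 x) :
    ∃ τ > 0, ∃ γ : ℝ → E, γ 0 = x ∧ IsIntegralCurveOn γ (fun _ => f) (Icc 0 τ) ∧
      MapsTo γ (Icc 0 τ) U ∧ ∀ t ∈ Icc 0 τ, V (γ t) = V x := by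
  obtain ⟨τ, hτ, γ, hγ0, hγ, hγm, K, δ, hδ, hdist⟩ :=
    exists_isIntegralCurveOn_dist_le_mul_exp hf (inter_mem hU (inter_mem hX hV)) hT
  obtain ⟨θ, η, hθ, hηX, hη, hstart, hend⟩ := hx.exists_seq
  refine ⟨τ, hτ.1, γ, hγ0, hγ, fun t ht => (hγm ht).1, fun t ht => le_antisymm ?_ ?_⟩
  · simpa only [hγ0] using
      hanti 0 τ γ (fun t ht => (hγm ht).2.1) hγ (left_mem_Icc.2 hτ.1.le) ht ht.1
  have hτθ : ∀ k, τ ≤ θ k := fun k => (hτ.2.trans (hθ k)).le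
  have hfollow : Tendsto (fun k => η k t) atTop (𝓝 (γ t)) := by
    have hstart' : Tendsto (fun k => dist (η k 0) x) atTop (𝓝 0) :=
      tendsto_iff_dist_tendsto_zero.1 hstart
    have hle : ∀ᶠ k in atTop, dist (η k t) (γ t) ≤ dist (η k 0) x * Real.exp (K * t) :=
      (hstart'.eventually_le_const hδ).mono fun k hk =>
        hdist (η k) ((hη k).mono (Icc_subset_Icc_right (hτθ k))) hk t ht
    refine tendsto_iff_dist_tendsto_zero.2
      (squeeze_zero' (Eventually.of_forall fun _ => dist_nonneg) hle ?_)
    simpa only [zero_mul] using hstart'.mul_const (Real.exp (K * t))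
  refine le_of_tendsto_of_tendsto' (hV.self_of_nhds.tendsto.comp hend)
    ((hγm ht).2.2.tendsto.comp hfollow) fun k => ?_
  have htθ : t ≤ θ k := ht.2.trans (hτθ k)
  exact hanti 0 (θ k) (η k) (hηX k) (hη k) ⟨ht.1, htθ⟩ ⟨ht.1.trans htθ, le_rfl⟩ htθ

end Nonwandering

section CooperativeFirstIntegral

theorem sum_smul_map_single {ι R M : Type*} [Fintype ι] [DecidableEq ι] [Semiring R]
    [AddCommMonoid M] [Module R M] (L : (ι → R) →ₗ[R] M) (v : ι → R) :
    ∑ j, v j • L (Pi.single j 1) = L v := by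
  simp only [← map_smul, ← map_sum, ← pi_eq_sum_univ' v]

variable {n : ℕ} {f : (Fin n → ℝ) → (Fin n → ℝ)} {H : (Fin n → ℝ) → ℝ} {X : Set (Fin n → ℝ)}
  {y : Fin n → ℝ}

theorem norm_le_eunorm (v : Fin n → ℝ) : ‖v‖ ≤ eunorm v :=
  (pi_norm_le_iff_of_nonneg (Real.sqrt_nonneg _)).2 fun i => Real.abs_le_sqrt
    (Finset.single_le_sum (f := fun i => v i ^ 2) (fun _ _ => sq_nonneg _) (Finset.mem_univ i))

theorem eventually_matIrred {S : Type*} [TopologicalSpace S] {A : S → Fin n → Fin n → ℝ} {s : S}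
    (hA : ContinuousAt A s) (hs : matIrred (A s)) : ∀ᶠ r in 𝓝 s, matIrred (A r) := by
  refine eventually_all.2 fun I => eventually_imp_distrib_left.2 fun hI =>
    eventually_imp_distrib_left.2 fun hI' => ?_
  obtain ⟨i, hi, j, hj, hij⟩ := hs I hI hI'
  exact ((continuousAt_pi.1 (continuousAt_pi.1 hA i) j).eventually_ne hij).mono
    fun r hr => ⟨i, hi, j, hj, hr⟩

theorem continuousAt_jacMat (hf : ContDiffAt ℝ 1 f y) : ContinuousAt (jacMat f) y :=
  continuousAt_pi.2 fun i => continuousAt_pi.2 fun _ =>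
    continuousAt_pi.1 ((hf.continuousAt_fderiv one_ne_zero).clm_apply continuousAt_const) i

/-- The contributions `∂ᵢH · fⁱ` of the coordinates to the derivative of `H` along `f`. -/
def flux (f : (Fin n → ℝ) → (Fin n → ℝ)) (H : (Fin n → ℝ) → ℝ) (y : Fin n → ℝ) (i : Fin n) : ℝ :=
  fderiv ℝ H y (Pi.single i 1) * f y i

/-- The Jacobian matrix of `f` conjugated by the diagonal matrix of the gradient of `H`: the rates
of the master equation satisfied by `flux f H` along the solutions of `ẋ = f(x)`. -/
def transferRate (f : (Fin n → ℝ) → (Fin n → ℝ)) (H : (Fin n → ℝ) → ℝ) (y : Fin n → ℝ) :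
    Matrix (Fin n) (Fin n) ℝ :=
  fun i j => fderiv ℝ H y (Pi.single i 1) * jacMat f y i j / fderiv ℝ H y (Pi.single j 1)

theorem sum_flux : ∑ i, flux f H y i = fderiv ℝ H y (f y) := by
  rw [← ContinuousLinearMap.coe_coe, ← sum_smul_map_single]
  simp only [flux, smul_eq_mul, mul_comm, ContinuousLinearMap.coe_coe]

theorem flux_eq_zero_iff (hgrad : ∀ i, fderiv ℝ H y (Pi.single i 1) ≠ 0) :
    flux f H y = 0 ↔ f y = 0 := by
  simp [funext_iff, flux, hgrad]

theorem continuousAt_flux (hf : ContinuousAt f y) (hH : ContDiffAt ℝ 1 H y) :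
    ContinuousAt (flux f H) y :=
  continuousAt_pi.2 fun i => ((hH.continuousAt_fderiv one_ne_zero).clm_apply
    continuousAt_const).mul (continuousAt_pi.1 hf i)

theorem transferRate_nonneg (hcoop : ∀ i j, i ≠ j → 0 ≤ jacMat f y i j)
    (hgrad : ∀ i, 0 < fderiv ℝ H y (Pi.single i 1)) (i j : Fin n) (hij : i ≠ j) :
    0 ≤ transferRate f H y i j :=
  div_nonneg (mul_nonneg (hgrad i).le (hcoop i j hij)) (hgrad j).le

theorem matIrred_transferRate (hirr : matIrred (jacMat f y))
    (hgrad : ∀ i, fderiv ℝ H y (Pi.single i 1) ≠ 0) : matIrred (transferRate f H y) := by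
  intro S hS hS'
  obtain ⟨i, hi, j, hj, hij⟩ := hirr S hS hS'
  exact ⟨i, hi, j, hj, div_ne_zero (mul_ne_zero (hgrad i) hij) (hgrad j)⟩

theorem masterRate_transferRate_flux (hgrad : ∀ i, fderiv ℝ H y (Pi.single i 1) ≠ 0) (i : Fin n) :
    masterRate (transferRate f H y) (flux f H y) i =
      -fderiv ℝ H y (fderiv ℝ f y (Pi.single i 1)) * f y i +
        fderiv ℝ H y (Pi.single i 1) * fderiv ℝ f y (f y) i := by
  have hcol : fderiv ℝ H y (fderiv ℝ f y (Pi.single i 1)) =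
      ∑ j, fderiv ℝ H y (Pi.single j 1) * jacMat f y j i := by
    rw [← ContinuousLinearMap.coe_coe, ← sum_smul_map_single]
    simp only [jacMat, smul_eq_mul, mul_comm, ContinuousLinearMap.coe_coe]
  have hrow : fderiv ℝ f y (f y) i = ∑ j, jacMat f y i j * f y j := by
    rw [← ContinuousLinearMap.coe_coe, ← sum_smul_map_single]
    simp [jacMat, mul_comm]
  rw [masterRate, hcol, hrow, neg_mul, neg_add_eq_sub, Finset.mul_sum, Finset.sum_mul,
    ← Finset.sum_sub_distrib]
  refine Finset.sum_congr rfl fun j _ => ?_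
  have hi := hgrad i
  have hj := hgrad j
  simp only [transferRate, flux]
  field_simp

theorem hasDerivAt_flux {γ : ℝ → Fin n → ℝ} {t : ℝ} (hf : ContDiffAt ℝ 1 f (γ t))
    (hH : ContDiffAt ℝ 1 H (γ t)) (hfi : ∀ᶠ z in 𝓝 (γ t), fderiv ℝ H z (f z) = 0)
    (hgrad : ∀ i, fderiv ℝ H (γ t) (Pi.single i 1) ≠ 0)
    (hγ : ∀ᶠ s in 𝓝 t, HasDerivAt γ (f (γ s)) s) :
    HasDerivAt (fun s => flux f H (γ s))
      (masterRate (transferRate f H (γ t)) (flux f H (γ t))) t := by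
  have hf' := hf.hasStrictFDerivAt one_ne_zero
  refine hasDerivAt_pi.2 fun i => ?_
  rw [masterRate_transferRate_flux hgrad]
  exact (hasDerivAt_fderiv_apply_of_firstIntegral hf' hH hfi hγ (Pi.single i 1)).mul
    (hasDerivAt_pi.1 (hf'.hasFDerivAt.comp_hasDerivAt t hγ.self_of_nhds) i)

theorem hasDerivAt_flux_of_isIntegralCurveOn (hX : IsOpen X) (hf : ContDiffOn ℝ 1 f X)
    (hH : ContDiffOn ℝ 1 H X) (hfi : ∀ y ∈ X, fderiv ℝ H y (f y) = 0)
    (hgrad : ∀ y ∈ X, ∀ i, fderiv ℝ H y (Pi.single i 1) ≠ 0) {γ : ℝ → Fin n → ℝ} {a b : ℝ}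
    (hγX : MapsTo γ (Icc a b) X) (hγ : IsIntegralCurveOn γ (fun _ => f) (Icc a b)) :
    ∀ t ∈ Ioo a b, HasDerivAt (fun s => flux f H (γ s))
      (masterRate (transferRate f H (γ t)) (flux f H (γ t))) t := by
  intro t ht
  have hnhds : X ∈ 𝓝 (γ t) := hX.mem_nhds (hγX (Ioo_subset_Icc_self ht))
  refine hasDerivAt_flux (hf.contDiffAt hnhds) (hH.contDiffAt hnhds) (mem_of_superset hnhds hfi)
    (hgrad _ (mem_of_mem_nhds hnhds)) (mem_of_superset (Ioo_mem_nhds ht.1 ht.2) fun s hs =>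
      (hγ s (Ioo_subset_Icc_self hs)).hasDerivAt (Icc_mem_nhds hs.1 hs.2))

theorem antitoneOn_sum_abs_flux (hX : IsOpen X) (hf : ContDiffOn ℝ 1 f X) (hcoop : coopVF f X)
    (hH : ContDiffOn ℝ 1 H X) (hfi : ∀ y ∈ X, fderiv ℝ H y (f y) = 0)
    (hgrad : ∀ y ∈ X, ∀ i, 0 < fderiv ℝ H y (Pi.single i 1)) {γ : ℝ → Fin n → ℝ} {a b : ℝ}
    (hγX : MapsTo γ (Icc a b) X) (hγ : IsIntegralCurveOn γ (fun _ => f) (Icc a b)) :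
    AntitoneOn (fun t => ∑ i, |flux f H (γ t) i|) (Icc a b) := by
  have hflux : ContinuousOn (flux f H) X := fun y hy =>
    (continuousAt_flux (hf.continuousOn.continuousAt (hX.mem_nhds hy))
      (hH.contDiffAt (hX.mem_nhds hy))).continuousWithinAt
  exact antitoneOn_sum_abs_of_masterRate (Q := fun t => transferRate f H (γ t))
    (fun t ht => transferRate_nonneg (hcoop _ (hγX (Ioo_subset_Icc_self ht)))
      (hgrad _ (hγX (Ioo_subset_Icc_self ht))))
    (hflux.comp hγ.continuousOn hγX)
    (hasDerivAt_flux_of_isIntegralCurveOn hX hf hH hfi (fun y hy i => (hgrad y hy i).ne') hγX hγ)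

theorem exists_eq_zero_of_sum_abs_flux_eq_const (hX : IsOpen X) (hf : ContDiffOn ℝ 1 f X)
    (hcoop : coopVF f X) (hH : ContDiffOn ℝ 1 H X) (hfi : ∀ y ∈ X, fderiv ℝ H y (f y) = 0)
    (hgrad : ∀ y ∈ X, ∀ i, 0 < fderiv ℝ H y (Pi.single i 1)) {γ : ℝ → Fin n → ℝ} {a b : ℝ}
    (hab : a < b) (hγX : MapsTo γ (Icc a b) X) (hγ : IsIntegralCurveOn γ (fun _ => f) (Icc a b))
    (hirr : ∀ t ∈ Ioo a b, matIrred (jacMat f (γ t))) {c : ℝ}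
    (hc : ∀ t ∈ Ioo a b, ∑ i, |flux f H (γ t) i| = c) :
    ∃ t ∈ Ioo a b, f (γ t) = 0 := by
  have hmem : ∀ t ∈ Ioo a b, γ t ∈ X := fun t ht => hγX (Ioo_subset_Icc_self ht)
  have hgrad' : ∀ y ∈ X, ∀ i, fderiv ℝ H y (Pi.single i 1) ≠ 0 := fun y hy i => (hgrad y hy i).ne'
  obtain ⟨t, ht, hzero⟩ := exists_eq_zero_of_sum_abs_eq_const hab
    (fun t ht => transferRate_nonneg (hcoop _ (hmem t ht)) (hgrad _ (hmem t ht)))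
    (fun t ht => matIrred_transferRate (hirr t ht) (hgrad' _ (hmem t ht)))
    (hasDerivAt_flux_of_isIntegralCurveOn hX hf hH hfi hgrad' hγX hγ)
    (fun t ht => sum_flux.trans (hfi _ (hmem t ht))) hc
  exact ⟨t, ht, (flux_eq_zero_iff (hgrad' _ (hmem t ht))).1 hzero⟩

end CooperativeFirstIntegral

theorem stmt_7_general {n : ℕ} {X : Set (Fin n → ℝ)} (hX : IsOpen X)
    {f : (Fin n → ℝ) → (Fin n → ℝ)} (hf : ContDiffOn ℝ 1 f X) (hcoop : coopVF f X)
    {H : (Fin n → ℝ) → ℝ} (hH : ContDiffOn ℝ 1 H X)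
    (hfi : ∀ x ∈ X, fderiv ℝ H x (f x) = 0)
    (hgrad : ∀ x ∈ X, ∀ i, 0 < fderiv ℝ H x (Pi.single i 1))
    {x : Fin n → ℝ} (hx : x ∈ X) (hirr : matIrred (jacMat f x)) {T : ℝ} (hT : 0 < T)
    (hnw : IsNonwanderingAfter f X T x) : f x = 0 := by
  by_contra hfx
  have hfX : ∀ y ∈ X, ContDiffAt ℝ 1 f y := fun y hy => hf.contDiffAt (hX.mem_nhds hy)
  have hU : ∀ᶠ y in 𝓝 x, y ∈ X ∧ matIrred (jacMat f y) ∧ f y ≠ 0 :=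
    (hX.eventually_mem hx).and ((eventually_matIrred (continuousAt_jacMat (hfX x hx)) hirr).and
      ((hfX x hx).continuousAt.eventually_ne hfx))
  have hV : ∀ᶠ y in 𝓝 x, ContinuousAt (fun z => ∑ i, |flux f H z i|) y :=
    (hX.eventually_mem hx).mono fun y hy => tendsto_finsetSum _ fun i _ => (continuousAt_pi.1
      (continuousAt_flux (hfX y hy).continuousAt (hH.contDiffAt (hX.mem_nhds hy))) i).abs
  obtain ⟨τ, hτ, γ, -, hγ, hγU, hVγ⟩ := exists_isIntegralCurveOn_lyapunov_eq (hX.mem_nhds hx)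
    (hfX x hx) hV (fun _ _ _ => antitoneOn_sum_abs_flux hX hf hcoop hH hfi hgrad) hT hnw hU
  obtain ⟨t, ht, hzero⟩ := exists_eq_zero_of_sum_abs_flux_eq_const hX hf hcoop hH hfi hgrad hτ
    (fun t ht => (hγU ht).1) hγ (fun t ht => (hγU (Ioo_subset_Icc_self ht)).2.1)
    fun t ht => hVγ t (Ioo_subset_Icc_self ht)
  exact (hγU (Ioo_subset_Icc_self ht)).2.2 hzero

/-- a backward nonwandering point of a cooperative irreducible system
with a `C¹` first integral with positive gradient is an equilibrium. -/
theorem stmt_7 {n : ℕ} {X : Set (Fin n → ℝ)} (hX : IsOpen X)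
    {f : (Fin n → ℝ) → (Fin n → ℝ)} (hf : ContDiffOn ℝ 1 f X) (hcoop : coopVF f X)
    (hirr : ∀ x ∈ X, matIrred (jacMat f x))
    {H : (Fin n → ℝ) → ℝ} (hH : ContDiffOn ℝ 1 H X)
    (hfi : ∀ x ∈ X, fderiv ℝ H x (f x) = 0)
    (hgrad : ∀ x ∈ X, ∀ i, 0 < fderiv ℝ H x (Pi.single i 1))
    {x : Fin n → ℝ} (hx : x ∈ X)
    (hnw : ∀ ε > (0 : ℝ), ∀ T > (0 : ℝ), ∃ θ > T, ∃ η : ℝ → Fin n → ℝ,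
      IsSolOn f X (Set.Icc (-θ) 0) η ∧ eunorm (η 0 - x) < ε ∧
        eunorm (η (-θ) - x) < ε) :
    f x = 0 := by
  refine stmt_7_general hX hf hcoop hH hfi hgrad hx (hirr x hx) one_pos fun ε hε => ?_
  obtain ⟨θ, hθ, η, hη, hη0, hηθ⟩ := hnw ε hε 1 one_pos
  exact ⟨θ, hθ, η, hη.1, hη.2, (dist_eq_norm _ x).trans_lt ((norm_le_eunorm _).trans_lt hη0),
    (dist_eq_norm _ x).trans_lt ((norm_le_eunorm _).trans_lt hηθ)⟩
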